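/- Let Θ be a finite multiset of real numbers such that no element of Θ is an integer multiple of π/2. Then the following are equivalent: (1) the multiset {cot θ : θ ∈ Θ} (with multiplicities) is negation-invariant; (2) for every nonzero real number r, the number of elements θ of Θ (counted with multiplicity) for which there exists an integer m with (θ + mπ)⁻¹ = r equals the number of elements θ of Θ (counted with multiplicity) for which there exists an integer m with (θ + mπ)⁻¹ = −r. -/

import Mathlib

open Real
open scoped Classical

theorem aux_cot (θ x : ℝ) (h : ∀ k : ℤ, θ ≠ k * (π / 2)) :
    (∃ m : ℤ, θ + m * π = x) ↔ Real.cot θ = Real.cot x := by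
  have hs : sin θ ≠ 0 := by
    intro h0
    obtain ⟨n, hn⟩ := Real.sin_eq_zero_iff.1 h0
    apply h (2 * n)
    push_cast
    linarith
  have hc : cos θ ≠ 0 := by
    intro h0
    obtain ⟨n, hn⟩ := Real.cos_eq_zero_iff.1 h0
    apply h (2 * n + 1)
    push_cast
    linarith
  have key : (∃ m : ℤ, θ + m * π = x) ↔ sin (x - θ) = 0 := by
    rw [Real.sin_eq_zero_iff]
    constructor
    · rintro ⟨m, hm⟩
      exact ⟨m, by linarith⟩
    · rintro ⟨m, hm⟩
      exact ⟨m, by linarith⟩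
  rw [key, Real.cot_eq_cos_div_sin, Real.cot_eq_cos_div_sin, Real.sin_sub]
  by_cases hx : sin x = 0
  · have hcx : cos x ≠ 0 := by
      intro h0
      have := Real.sin_sq_add_cos_sq x
      rw [hx, h0] at this
      norm_num at this
    simp [hx, hs, hc, hcx]
  · rw [div_eq_div_iff hs hx]
    constructor <;> intro h1 <;> linarith

theorem aux_count (Θ : Multiset ℝ) (hΘ : ∀ θ ∈ Θ, ∀ k : ℤ, θ ≠ k * (π / 2)) (r : ℝ) :
    Θ.countP (fun θ => ∃ m : ℤ, (θ + m * π)⁻¹ = r) =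
      (Θ.map Real.cot).count (Real.cot r⁻¹) := by
  rw [Multiset.count, Multiset.countP_map, ← Multiset.countP_eq_card_filter]
  refine Multiset.countP_congr rfl fun θ hθ => ?_
  simp only [inv_eq_iff_eq_inv]
  rw [aux_cot θ _ (hΘ θ hθ)]
  exact propext eq_comm

theorem aux_neg (S : Multiset ℝ) :
    S.map (fun r => -r) = S ↔ ∀ c, S.count c = S.count (-c) := by
  have h : ∀ c, (S.map (fun r => -r)).count c = S.count (-c) := by
    intro c
    have := Multiset.count_map_eq_count' (fun r : ℝ => -r) S neg_injective (-c)
    simpa using this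
  rw [Multiset.ext]
  simp only [h]
  exact forall_congr' fun c => eq_comm

/-- For a finite multiset `Θ` of real numbers none of which is an integer multiple of
`π/2`, the multiset `{cot θ : θ ∈ Θ}` is negation-invariant if and only if for every
nonzero real `r` the number of `θ ∈ Θ` (with multiplicity) such that `(θ+mπ)⁻¹ = r` for
some integer `m` equals the number of `θ ∈ Θ` such that `(θ+mπ)⁻¹ = -r` for some `m`. -/
theorem cot_multiset_neg_invariant_iff_count
    (Θ : Multiset ℝ) (hΘ : ∀ θ ∈ Θ, ∀ k : ℤ, θ ≠ k * (π / 2)) :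
    ((Θ.map Real.cot).map (fun r => -r) = Θ.map Real.cot) ↔
      ∀ r : ℝ, r ≠ 0 →
        Θ.countP (fun θ => ∃ m : ℤ, (θ + m * π)⁻¹ = r) =
          Θ.countP (fun θ => ∃ m : ℤ, (θ + m * π)⁻¹ = -r) := by
  rw [aux_neg]
  have hn : ∀ x : ℝ, Real.cot (-x) = -Real.cot x := by
    intro x
    simp [Real.cot_eq_cos_div_sin, div_neg]
  simp only [aux_count Θ hΘ, inv_neg, hn]
  constructor
  · intro h r _
    exact h _
  · intro h c
    by_cases hc : c = 0
    · simp [hc]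
    · have h1 : Real.cot (Real.arctan c⁻¹) = c := by
        have := Real.tan_arctan c⁻¹
        rw [Real.tan_eq_sin_div_cos] at this
        rw [Real.cot_eq_cos_div_sin, ← inv_div, this, inv_inv]
      have h2 := h (Real.arctan c⁻¹)⁻¹ (by simpa [Real.arctan_eq_zero_iff] using hc)
      rwa [inv_inv, h1] at h2
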